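/- (Transferability) Let ν be the standard Gaussian on ℝ^d, and let {B_i(f)}, {B_i(h)} be two measurable K-partitions of ℝ^d with ν({z : label_f(z) ≠ label_h(z)}) ≤ δ and ν(B_i(f)) + δ ≤ 1/2 for all i. Then for every η ≥ 0, ν({z : ∃ z' with ‖z - z'‖₂ ≤ η such that z' lies outside both the f-cell and the h-cell containing z}) ≥ 1 - √(π/2)·e^{-η²/2} - 2δ. -/

import Mathlib

open Real Set MeasureTheory ProbabilityTheory

/-- The standard normal cumulative distribution function. -/
noncomputable def Phi (x : ℝ) : ℝ :=
  (Real.sqrt (2 * π))⁻¹ * ∫ u in Set.Iic x, Real.exp (-u ^ 2 / 2)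

/-- The inverse of the standard normal cdf. -/
noncomputable def PhiInv : ℝ → ℝ := Function.invFun Phi

/-- The standard Gaussian measure `N(0, I_d)` on `ℝ^d`. -/
noncomputable def stdGaussian (d : ℕ) : Measure (Fin d → ℝ) :=
  Measure.pi fun _ => gaussianReal 0 1

/-- The Euclidean (ℓ₂) norm on `ℝ^d`. -/
noncomputable def l2 {d : ℕ} (z : Fin d → ℝ) : ℝ := Real.sqrt (∑ i, z i ^ 2)

/-- The ℓ₂ distance from a point to a set. -/
noncomputable def distSet {d : ℕ} (z : Fin d → ℝ) (A : Set (Fin d → ℝ)) : ℝ :=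
  sInf {t | ∃ z' ∈ A, t = l2 (z - z')}

open Filter Topology

section ScalarGaussian

lemma continuous_gaussianPDFReal_std : Continuous (gaussianPDFReal 0 1) := by
  rw [gaussianPDFReal_def]
  fun_prop

lemma hasDerivAt_gaussianPDFReal_std (x : ℝ) :
    HasDerivAt (gaussianPDFReal 0 1) (-x * gaussianPDFReal 0 1 x) x := by
  rw [gaussianPDFReal_def]
  have h : HasDerivAt (fun y : ℝ => -(y - 0) ^ 2 / (2 * ((1 : NNReal) : ℝ))) (-x) x := by
    refine ((((hasDerivAt_id x).sub_const 0).pow 2).neg.div_const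
      (2 * ((1 : NNReal) : ℝ))).congr_deriv ?_
    simp
    ring
  refine (h.exp.const_mul (√(2 * π * ((1 : NNReal) : ℝ)))⁻¹).congr_deriv ?_
  ring

lemma Phi_eq_setIntegral (x : ℝ) : Phi x = ∫ u in Iic x, gaussianPDFReal 0 1 u := by
  rw [Phi, ← integral_const_mul]
  simp [gaussianPDFReal_def]

lemma Phi_eq_cdf (x : ℝ) : Phi x = cdf (gaussianReal 0 1) x := by
  rw [cdf_eq_real, Measure.real, gaussianReal_apply_eq_integral 0 one_ne_zero, Phi_eq_setIntegral,
    ENNReal.toReal_ofReal]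
  exact integral_nonneg fun u => gaussianPDFReal_nonneg 0 1 u

lemma hasDerivAt_Phi (x : ℝ) : HasDerivAt Phi (gaussianPDFReal 0 1 x) x := by
  have hint : ∀ a : ℝ, IntegrableOn (gaussianPDFReal 0 1) (Iic a) := fun a =>
    (integrable_gaussianPDFReal 0 1).integrableOn
  have h : Phi = fun y => Phi 0 + ∫ u in (0 : ℝ)..y, gaussianPDFReal 0 1 u := by
    funext y
    rw [← intervalIntegral.integral_Iic_sub_Iic (hint 0) (hint y), ← Phi_eq_setIntegral,
      ← Phi_eq_setIntegral]
    ring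
  rw [h]
  exact (intervalIntegral.integral_hasDerivAt_right
    (continuous_gaussianPDFReal_std.intervalIntegrable _ _)
    continuous_gaussianPDFReal_std.stronglyMeasurable.stronglyMeasurableAtFilter
    continuous_gaussianPDFReal_std.continuousAt).const_add _

lemma continuous_Phi : Continuous Phi :=
  continuous_iff_continuousAt.2 fun x => (hasDerivAt_Phi x).continuousAt

lemma strictMono_Phi : StrictMono Phi :=
  strictMono_of_deriv_pos fun x => by
    rw [(hasDerivAt_Phi x).deriv]
    exact gaussianPDFReal_pos 0 1 x one_ne_zero

lemma tendsto_Phi_atBot : Tendsto Phi atBot (𝓝 0) := by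
  rw [funext Phi_eq_cdf]
  exact tendsto_cdf_atBot _

lemma tendsto_Phi_atTop : Tendsto Phi atTop (𝓝 1) := by
  rw [funext Phi_eq_cdf]
  exact tendsto_cdf_atTop _

lemma Phi_pos (x : ℝ) : 0 < Phi x := by
  have h : 0 ≤ Phi (x - 1) := by
    rw [Phi_eq_cdf]
    exact cdf_nonneg _ _
  exact h.trans_lt (strictMono_Phi (by linarith))

lemma Phi_lt_one (x : ℝ) : Phi x < 1 := by
  have h : Phi (x + 1) ≤ 1 := by
    rw [Phi_eq_cdf]
    exact cdf_le_one _ _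
  exact (strictMono_Phi (by linarith)).trans_le h

lemma Phi_neg (x : ℝ) : Phi (-x) = 1 - Phi x := by
  have hd : ∀ y, HasDerivAt (fun y => Phi (-y) + Phi y) 0 y := fun y => by
    have h := ((hasDerivAt_Phi (-y)).comp y (hasDerivAt_neg y)).add (hasDerivAt_Phi y)
    have e : gaussianPDFReal 0 1 (-y) = gaussianPDFReal 0 1 y := by
      simp [gaussianPDFReal_def]
    refine h.congr_deriv ?_
    rw [e]
    ring
  have hc := is_const_of_deriv_eq_zero (fun y => (hd y).differentiableAt) (fun y => (hd y).deriv)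
  have hlim : Tendsto (fun y => Phi (-y) + Phi y) atTop (𝓝 (0 + 1)) :=
    (tendsto_Phi_atBot.comp tendsto_neg_atTop_atBot).add tendsto_Phi_atTop
  have h1 : Tendsto (fun y => Phi (-y) + Phi y) atTop (𝓝 (Phi (-x) + Phi x)) := by
    rw [funext fun y => hc y x]
    exact tendsto_const_nhds
  linarith [tendsto_nhds_unique hlim h1]

lemma Phi_zero : Phi 0 = 1 / 2 := by
  have := Phi_neg 0
  rw [neg_zero] at this
  linarith

lemma Phi_le_half {x : ℝ} (h : Phi x ≤ 1 / 2) : x ≤ 0 := by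
  rw [← Phi_zero] at h
  exact strictMono_Phi.le_iff_le.1 h

lemma PhiInv_Phi (x : ℝ) : PhiInv (Phi x) = x :=
  Function.leftInverse_invFun strictMono_Phi.injective x

lemma exists_Phi_eq {p : ℝ} (h0 : 0 < p) (h1 : p < 1) : ∃ x, Phi x = p :=
  mem_range_of_exists_le_of_exists_ge continuous_Phi
    ((tendsto_Phi_atBot.eventually (gt_mem_nhds h0)).exists.imp fun _ => le_of_lt)
    ((tendsto_Phi_atTop.eventually (lt_mem_nhds h1)).exists.imp fun _ => le_of_lt)

lemma Phi_PhiInv {p : ℝ} (h0 : 0 < p) (h1 : p < 1) : Phi (PhiInv p) = p :=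
  Function.invFun_eq (exists_Phi_eq h0 h1)

lemma strictMonoOn_PhiInv : StrictMonoOn PhiInv (Ioo 0 1) := by
  intro p hp q hq h
  rwa [← strictMono_Phi.lt_iff_lt, Phi_PhiInv hp.1 hp.2, Phi_PhiInv hq.1 hq.2]

lemma hasDerivAt_PhiInv {p : ℝ} (h0 : 0 < p) (h1 : p < 1) :
    HasDerivAt PhiInv (gaussianPDFReal 0 1 (PhiInv p))⁻¹ p := by
  have himage : PhiInv '' Ioo 0 1 = univ :=
    eq_univ_of_forall fun x => ⟨Phi x, ⟨Phi_pos x, Phi_lt_one x⟩, PhiInv_Phi x⟩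
  refine HasDerivAt.of_local_left_inverse
    (strictMonoOn_PhiInv.continuousAt_of_image_mem_nhds (Ioo_mem_nhds h0 h1) ?_)
    (hasDerivAt_Phi _) (gaussianPDFReal_pos 0 1 _ one_ne_zero).ne' ?_
  · rw [himage]
    exact univ_mem
  · filter_upwards [Ioo_mem_nhds h0 h1] with q hq using Phi_PhiInv hq.1 hq.2

/-- The Gaussian isoperimetric profile. -/
noncomputable def isoProfile (p : ℝ) : ℝ := gaussianPDFReal 0 1 (PhiInv p)

lemma isoProfile_pos (p : ℝ) : 0 < isoProfile p := gaussianPDFReal_pos 0 1 _ one_ne_zero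

lemma isoProfile_Phi (x : ℝ) : isoProfile (Phi x) = gaussianPDFReal 0 1 x := by
  rw [isoProfile, PhiInv_Phi]

lemma hasDerivAt_isoProfile {p : ℝ} (h0 : 0 < p) (h1 : p < 1) :
    HasDerivAt isoProfile (-PhiInv p) p := by
  have h := (hasDerivAt_gaussianPDFReal_std (PhiInv p)).comp p (hasDerivAt_PhiInv h0 h1)
  have hpos := gaussianPDFReal_pos 0 1 (PhiInv p) one_ne_zero
  refine h.congr_deriv ?_
  field_simp

/-- Translating a lower tail by `r` away from the origin costs a factor `exp (-r² / 2)`. -/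
lemma Phi_sub_le {a r : ℝ} (ha : a ≤ 0) (hr : 0 ≤ r) :
    Phi (a - r) ≤ Real.exp (-r ^ 2 / 2) * Phi a := by
  let k : ℝ → ℝ := fun x => Real.exp (-r ^ 2 / 2) * Phi x - Phi (x - r)
  have hk : ∀ x, HasDerivAt k
      (Real.exp (-r ^ 2 / 2) * gaussianPDFReal 0 1 x - gaussianPDFReal 0 1 (x - r)) x := fun x => by
    have h := ((hasDerivAt_Phi x).const_mul (Real.exp (-r ^ 2 / 2))).sub
      ((hasDerivAt_Phi (x - r)).comp x ((hasDerivAt_id x).sub_const r))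
    refine h.congr_deriv ?_
    simp
  have hmono : MonotoneOn k (Iic 0) := by
    refine monotoneOn_of_deriv_nonneg (convex_Iic 0)
      (fun x _ => (hk x).continuousAt.continuousWithinAt)
      (fun x _ => (hk x).differentiableAt.differentiableWithinAt) fun x hx => ?_
    rw [interior_Iic] at hx
    rw [(hk x).deriv, sub_nonneg]
    simp only [gaussianPDFReal_def, NNReal.coe_one]
    rw [mul_left_comm, ← Real.exp_add]
    gcongr
    nlinarith [mul_nonneg hr (neg_nonneg.2 (le_of_lt hx))]
  have hlim : Tendsto k atBot (𝓝 (Real.exp (-r ^ 2 / 2) * 0 - 0)) :=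
    (tendsto_Phi_atBot.const_mul _).sub
      (tendsto_Phi_atBot.comp (tendsto_atBot_add_const_right _ (-r) tendsto_id))
  have h0 : Real.exp (-r ^ 2 / 2) * 0 - 0 ≤ k a := by
    refine le_of_tendsto hlim ?_
    filter_upwards [eventually_le_atBot a] with x hx
    exact hmono (hx.trans ha) ha hx
  simp only [k] at h0
  linarith

/-- Stein's identity for the standard Gaussian. -/
lemma integral_mul_eq_integral_deriv_gaussianReal {h h' : ℝ → ℝ} {C C' : ℝ}
    (hd : ∀ x, HasDerivAt h (h' x) x) (hc : Continuous h')
    (hb : ∀ x, |h x| ≤ C) (hb' : ∀ x, |h' x| ≤ C') :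
    ∫ x, x * h x ∂gaussianReal 0 1 = ∫ x, h' x ∂gaussianReal 0 1 := by
  have hcont : Continuous h := continuous_iff_continuousAt.2 fun x => (hd x).continuousAt
  have hi : Integrable (fun x => gaussianPDFReal 0 1 x * x) := by
    have h1 : Integrable (fun x : ℝ => x) (gaussianReal 0 1) :=
      memLp_one_iff_integrable.1 (memLp_id_gaussianReal 1)
    rw [gaussianReal_of_var_ne_zero 0 one_ne_zero,
      integrable_withDensity_iff_integrable_smul' (measurable_gaussianPDF 0 1)
        (ae_of_all _ fun _ => gaussianPDF_lt_top)] at h1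
    simpa [toReal_gaussianPDF] using h1
  have key := integral_mul_deriv_eq_deriv_mul_of_integrable (u := h) (u' := h')
    (v := gaussianPDFReal 0 1) (v' := fun x => -x * gaussianPDFReal 0 1 x)
    (fun x _ => hd x) (fun x _ => hasDerivAt_gaussianPDFReal_std x)
    ((hi.neg.bdd_mul hcont.aestronglyMeasurable (ae_of_all _ hb)).congr
      (ae_of_all _ fun x => by simp only [Pi.mul_apply, Pi.neg_apply]; ring))
    ((integrable_gaussianPDFReal 0 1).bdd_mul hc.aestronglyMeasurable (ae_of_all _ hb'))
    ((integrable_gaussianPDFReal 0 1).bdd_mul hcont.aestronglyMeasurable (ae_of_all _ hb))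
  rw [integral_gaussianReal_eq_integral_smul one_ne_zero,
    integral_gaussianReal_eq_integral_smul one_ne_zero]
  have e1 : ∫ x, gaussianPDFReal 0 1 x • (x * h x) =
      -∫ x, h x * (-x * gaussianPDFReal 0 1 x) := by
    rw [← integral_neg]
    congr 1
    funext x
    simp only [smul_eq_mul]
    ring
  rw [e1, key, neg_neg]
  congr 1
  funext x
  simp only [smul_eq_mul]
  ring

end ScalarGaussian

section HeatFlow

/-- The heat-flow average of `f` at time `t`, seen from the point `√t z`. -/
noncomputable def heatAvg (f : ℝ → ℝ) (t z : ℝ) : ℝ :=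
  ∫ w, f (√t * z + √(1 - t) * w) ∂gaussianReal 0 1

lemma integrable_of_continuous_of_bound {α : Type*} [MeasurableSpace α] [TopologicalSpace α]
    [OpensMeasurableSpace α] [SecondCountableTopology α] {μ : Measure α} [IsFiniteMeasure μ]
    {f : α → ℝ} {C : ℝ} (hc : Continuous f) (hb : ∀ x, |f x| ≤ C) : Integrable f μ :=
  Integrable.of_bound hc.aestronglyMeasurable C (ae_of_all _ hb)

lemma integrable_abs_gaussianReal : Integrable (fun w : ℝ => |w|) (gaussianReal 0 1) :=
  (memLp_one_iff_integrable.1 (memLp_id_gaussianReal 1)).abs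

variable {f f' f'' : ℝ → ℝ} {C : ℝ}

lemma abs_heatAvg_le (hb : ∀ x, |f x| ≤ C) (t z : ℝ) : |heatAvg f t z| ≤ C := by
  have h := norm_integral_le_of_norm_le_const (μ := gaussianReal 0 1)
    (f := fun w => f (√t * z + √(1 - t) * w)) (ae_of_all _ fun w => hb _)
  simpa [heatAvg] using h

lemma heatAvg_mem_Icc {a b : ℝ} (hc : Continuous f) (hab : ∀ x, f x ∈ Icc a b) (t z : ℝ) :
    heatAvg f t z ∈ Icc a b := by
  have hi : Integrable (fun w => f (√t * z + √(1 - t) * w)) (gaussianReal 0 1) :=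
    integrable_of_continuous_of_bound (by fun_prop) fun w =>
      abs_le_max_abs_abs (hab _).1 (hab _).2
  constructor
  · simpa [heatAvg] using integral_mono (integrable_const a) hi fun w => (hab _).1
  · simpa [heatAvg] using integral_mono hi (integrable_const b) fun w => (hab _).2

lemma continuous_heatAvg (hc : Continuous f) (hb : ∀ x, |f x| ≤ C) :
    Continuous fun p : ℝ × ℝ => heatAvg f p.1 p.2 :=
  continuous_of_dominated (bound := fun _ => C)
    (fun _ => Continuous.aestronglyMeasurable (by fun_prop))
    (fun _ => ae_of_all _ fun _ => hb _) (integrable_const _)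
    (ae_of_all _ fun _ => by fun_prop)

lemma heatAvg_zero (z : ℝ) : heatAvg f 0 z = ∫ w, f w ∂gaussianReal 0 1 := by
  simp [heatAvg]

lemma heatAvg_one (z : ℝ) : heatAvg f 1 z = f z := by
  simp [heatAvg]

lemma hasDerivAt_heatAvg_space (hd : ∀ x, HasDerivAt f (f' x) x) (hc' : Continuous f')
    {C' : ℝ} (hb : ∀ x, |f x| ≤ C) (hb' : ∀ x, |f' x| ≤ C') (t z : ℝ) :
    HasDerivAt (heatAvg f t) (√t * heatAvg f' t z) z := by
  have hc : Continuous f := continuous_iff_continuousAt.2 fun x => (hd x).continuousAt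
  have h := (hasDerivAt_integral_of_dominated_loc_of_deriv_le (μ := gaussianReal 0 1)
    (F := fun z w => f (√t * z + √(1 - t) * w))
    (F' := fun z w => √t * f' (√t * z + √(1 - t) * w)) (x₀ := z) (s := univ)
    (bound := fun _ => √t * C') univ_mem
    (Eventually.of_forall fun _ => Continuous.aestronglyMeasurable (by fun_prop))
    (integrable_of_continuous_of_bound (by fun_prop) fun w => hb _)
    (Continuous.aestronglyMeasurable (by fun_prop))
    (ae_of_all _ fun w y _ => by
      rw [norm_mul, Real.norm_of_nonneg (Real.sqrt_nonneg t)]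
      exact mul_le_mul_of_nonneg_left (hb' _) (Real.sqrt_nonneg t))
    (integrable_const _)
    (ae_of_all _ fun w y _ => ?_)).2
  · rwa [integral_const_mul] at h
  · have h1 : HasDerivAt (fun y => √t * y + √(1 - t) * w) (√t) y := by
      simpa using ((hasDerivAt_id y).const_mul (√t)).add_const (√(1 - t) * w)
    exact ((hd _).comp y h1).congr_deriv (mul_comm _ _)

lemma hasDerivAt_heatAvg_time (hd : ∀ x, HasDerivAt f (f' x) x)
    (hd' : ∀ x, HasDerivAt f' (f'' x) x) (hc'' : Continuous f'') {C' C'' : ℝ}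
    (hb : ∀ x, |f x| ≤ C) (hb' : ∀ x, |f' x| ≤ C') (hb'' : ∀ x, |f'' x| ≤ C'')
    {t : ℝ} (ht0 : 0 < t) (ht1 : t < 1) (z : ℝ) :
    HasDerivAt (fun s => heatAvg f s z)
      (z / (2 * √t) * heatAvg f' t z - heatAvg f'' t z / 2) t := by
  have hc : Continuous f := continuous_iff_continuousAt.2 fun x => (hd x).continuousAt
  have hc' : Continuous f' := continuous_iff_continuousAt.2 fun x => (hd' x).continuousAt
  have hC' : 0 ≤ C' := (abs_nonneg _).trans (hb' 0)
  have hs1 : 0 < √(1 - t) := Real.sqrt_pos.2 (by linarith)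
  have hint' : Integrable (fun w => f' (√t * z + √(1 - t) * w)) (gaussianReal 0 1) :=
    integrable_of_continuous_of_bound (by fun_prop) fun w => hb' _
  have h := (hasDerivAt_integral_of_dominated_loc_of_deriv_le (μ := gaussianReal 0 1)
    (F := fun s w => f (√s * z + √(1 - s) * w))
    (F' := fun s w => f' (√s * z + √(1 - s) * w) * (z / (2 * √s) - w / (2 * √(1 - s))))
    (x₀ := t) (s := Ioo (t / 2) ((1 + t) / 2))
    (bound := fun w => C' * (|z| / (2 * √(t / 2)) + |w| / (2 * √((1 - t) / 2))))
    (Ioo_mem_nhds (by linarith) (by linarith))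
    (Eventually.of_forall fun _ => Continuous.aestronglyMeasurable (by fun_prop))
    (integrable_of_continuous_of_bound (by fun_prop) fun w => hb _)
    (Continuous.aestronglyMeasurable (by fun_prop))
    (ae_of_all _ fun w s hs => ?_)
    (((integrable_const _).add (integrable_abs_gaussianReal.div_const _)).const_mul _)
    (ae_of_all _ fun w s hs => ?_)).2
  · refine h.congr_deriv ?_
    have hstein := integral_mul_eq_integral_deriv_gaussianReal
      (h := fun w => f' (√t * z + √(1 - t) * w))
      (h' := fun w => √(1 - t) * f'' (√t * z + √(1 - t) * w)) (C := C') (C' := √(1 - t) * C'')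
      (fun w => by
        have h1 : HasDerivAt (fun y => √t * z + √(1 - t) * y) (√(1 - t)) w := by
          simpa using ((hasDerivAt_id w).const_mul (√(1 - t))).const_add (√t * z)
        exact ((hd' _).comp w h1).congr_deriv (mul_comm _ _))
      (by fun_prop) (fun w => hb' _)
      (fun w => by
        rw [abs_mul, abs_of_pos hs1]
        exact mul_le_mul_of_nonneg_left (hb'' _) hs1.le)
    have hwint : Integrable (fun w => w * f' (√t * z + √(1 - t) * w)) (gaussianReal 0 1) :=
      (integrable_abs_gaussianReal.const_mul C').mono'
        (Continuous.aestronglyMeasurable (by fun_prop)) (ae_of_all _ fun w => by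
          rw [norm_mul, mul_comm]
          exact mul_le_mul_of_nonneg_right (hb' _) (abs_nonneg _))
    have e : (fun w => f' (√t * z + √(1 - t) * w) * (z / (2 * √t) - w / (2 * √(1 - t)))) =
        fun w => z / (2 * √t) * f' (√t * z + √(1 - t) * w) -
          (2 * √(1 - t))⁻¹ * (w * f' (√t * z + √(1 - t) * w)) := by
      funext w
      ring
    rw [e, integral_sub (hint'.const_mul _) (hwint.const_mul _), integral_const_mul,
      integral_const_mul, hstein, integral_const_mul, heatAvg, heatAvg]
    field_simp
  · rw [norm_mul]
    refine mul_le_mul (hb' _) ((norm_sub_le _ _).trans ?_) (norm_nonneg _) hC'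
    rw [norm_div, norm_div, Real.norm_of_nonneg (by positivity : (0 : ℝ) ≤ 2 * √s),
      Real.norm_of_nonneg (by positivity : (0 : ℝ) ≤ 2 * √(1 - s))]
    have := hs.1
    have := hs.2
    have h1 : 0 < √(t / 2) := Real.sqrt_pos.2 (by linarith)
    have h2 : 0 < √((1 - t) / 2) := Real.sqrt_pos.2 (by linarith)
    simp only [Real.norm_eq_abs]
    gcongr
    linarith
  · have hs0 : 0 < s := by linarith [hs.1]
    have hs1 : 0 < 1 - s := by linarith [hs.2]
    have h1 := ((Real.hasDerivAt_sqrt hs0.ne').mul_const z).add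
      ((((hasDerivAt_id s).const_sub 1).sqrt hs1.ne').mul_const w)
    refine ((hd _).comp s h1).congr_deriv ?_
    simp only [id, Pi.add_apply]
    ring

end HeatFlow

section Bobkov

/-- Bobkov's functional isoperimetric inequality on the line. -/
lemma isoProfile_integral_le_gaussianReal {f : ℕ → ℝ → ℝ} {ε : ℝ} (hε : 0 < ε)
    (hd : ∀ j x, HasDerivAt (f j) (f (j + 1) x) x) (hb : ∀ j, ∃ C, ∀ x, |f j x| ≤ C)
    (hf : ∀ x, f 0 x ∈ Icc ε (1 - ε)) :
    isoProfile (∫ x, f 0 x ∂gaussianReal 0 1) ≤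
      ∫ x, √(isoProfile (f 0 x) ^ 2 + f 1 x ^ 2) ∂gaussianReal 0 1 := by
  choose C hC using hb
  have hcont : ∀ j, Continuous (f j) := fun j =>
    continuous_iff_continuousAt.2 fun x => (hd j x).continuousAt
  let G : ℕ → ℝ → ℝ → ℝ := fun j => heatAvg (f j)
  have hGc : ∀ j, Continuous fun p : ℝ × ℝ => G j p.1 p.2 := fun j =>
    continuous_heatAvg (hcont j) (hC j)
  have hGb : ∀ j t z, G j t z ∈ Icc (-C j) (C j) := fun j t z =>
    abs_le.1 (abs_heatAvg_le (hC j) t z)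
  have hG0 : ∀ t z, G 0 t z ∈ Icc ε (1 - ε) := fun t z => heatAvg_mem_Icc (hcont 0) hf t z
  have hG01 : ∀ t z, 0 < G 0 t z ∧ G 0 t z < 1 := fun t z =>
    ⟨hε.trans_le (hG0 t z).1, (hG0 t z).2.trans_lt (by linarith)⟩
  have hGz : ∀ j t z, HasDerivAt (G j t) (√t * G (j + 1) t z) z := fun j t z =>
    hasDerivAt_heatAvg_space (hd j) (hcont _) (hC _) (hC _) t z
  have hGt : ∀ j t z, 0 < t → t < 1 → HasDerivAt (fun s => G j s z)
      (z / (2 * √t) * G (j + 1) t z - G (j + 2) t z / 2) t := fun j t z h0 h1 =>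
    hasDerivAt_heatAvg_time (hd j) (hd _) (hcont _) (hC _) (hC _) (hC _) h0 h1 z
  -- The state space of `(t, G 0, G 1, G 2, G 3)` and the functions of it that occur below.
  let S : Set (ℝ × ℝ × ℝ × ℝ × ℝ) := Icc 0 1 ×ˢ Icc ε (1 - ε) ×ˢ Icc (-C 1) (C 1) ×ˢ
    Icc (-C 2) (C 2) ×ˢ Icc (-C 3) (C 3)
  have hS : IsCompact S :=
    isCompact_Icc.prod (isCompact_Icc.prod (isCompact_Icc.prod (isCompact_Icc.prod isCompact_Icc)))
  have hSmem : ∀ t z, t ∈ Icc (0 : ℝ) 1 → (t, G 0 t z, G 1 t z, G 2 t z, G 3 t z) ∈ S :=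
    fun t z ht => ⟨ht, hG0 t z, hGb 1 t z, hGb 2 t z, hGb 3 t z⟩
  have hI : ContinuousOn (fun v : ℝ × ℝ × ℝ × ℝ × ℝ => isoProfile v.2.1) S := fun v hv =>
    ((hasDerivAt_isoProfile (hε.trans_le hv.2.1.1)
      (hv.2.1.2.trans_lt (by linarith))).continuousAt.comp
      (f := fun v : ℝ × ℝ × ℝ × ℝ × ℝ => v.2.1) (by fun_prop)).continuousWithinAt
  have hQ : ContinuousOn (fun v : ℝ × ℝ × ℝ × ℝ × ℝ => PhiInv v.2.1) S := fun v hv =>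
    ((hasDerivAt_PhiInv (hε.trans_le hv.2.1.1)
      (hv.2.1.2.trans_lt (by linarith))).continuousAt.comp
      (f := fun v : ℝ × ℝ × ℝ × ℝ × ℝ => v.2.1) (by fun_prop)).continuousWithinAt
  let R : ℝ × ℝ × ℝ × ℝ × ℝ → ℝ := fun v => √(isoProfile v.2.1 ^ 2 + v.1 * v.2.2.1 ^ 2)
  let P : ℝ × ℝ × ℝ × ℝ × ℝ → ℝ := fun v =>
    -(isoProfile v.2.1 * PhiInv v.2.1 * v.2.2.1) + v.1 * v.2.2.1 * v.2.2.2.1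
  let P' : ℝ × ℝ × ℝ × ℝ × ℝ → ℝ := fun v =>
    PhiInv v.2.1 ^ 2 * v.2.2.1 ^ 2 - v.2.2.1 ^ 2 - isoProfile v.2.1 * PhiInv v.2.1 * v.2.2.2.1 +
      v.1 * v.2.2.2.1 ^ 2 + v.1 * v.2.2.1 * v.2.2.2.2
  let T : ℝ × ℝ × ℝ × ℝ × ℝ → ℝ := fun v =>
    isoProfile v.2.1 * PhiInv v.2.1 * v.2.2.2.1 + v.2.2.1 ^ 2 - v.1 * v.2.2.1 * v.2.2.2.2
  have hRpos2 : ∀ v ∈ S, 0 < isoProfile v.2.1 ^ 2 + v.1 * v.2.2.1 ^ 2 := fun v hv =>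
    add_pos_of_pos_of_nonneg (pow_pos (isoProfile_pos _) 2) (mul_nonneg hv.1.1 (sq_nonneg _))
  have hRpos : ∀ v ∈ S, 0 < R v := fun v hv => Real.sqrt_pos.2 (hRpos2 v hv)
  have hRc : ContinuousOn R S := ((hI.pow 2).add (by fun_prop)).sqrt
  have hPc : ContinuousOn P S := ((hI.mul hQ).mul (by fun_prop)).neg.add (by fun_prop)
  have hP'c : ContinuousOn P' S :=
    (((((hQ.pow 2).mul (by fun_prop)).sub (by fun_prop)).sub
      ((hI.mul hQ).mul (by fun_prop))).add (by fun_prop)).add (by fun_prop)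
  have hTc : ContinuousOn T S :=
    (((hI.mul hQ).mul (by fun_prop)).add (by fun_prop)).sub (by fun_prop)
  have hPRc : ContinuousOn (fun v => P v / R v) S := hPc.div hRc fun v hv => (hRpos v hv).ne'
  have hTRc : ContinuousOn (fun v => T v / (2 * R v)) S :=
    hTc.div (continuousOn_const.mul hRc) fun v hv => (mul_pos two_pos (hRpos v hv)).ne'
  have hDc : ContinuousOn (fun v => P' v / R v - P v ^ 2 / R v ^ 3) S :=
    (hP'c.div hRc fun v hv => (hRpos v hv).ne').sub
      ((hPc.pow 2).div (hRc.pow 3) fun v hv => (pow_pos (hRpos v hv) 3).ne')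
  obtain ⟨CR, hCR⟩ := hS.exists_bound_of_continuousOn hRc
  obtain ⟨CP, hCP⟩ := hS.exists_bound_of_continuousOn hPRc
  obtain ⟨CT, hCT⟩ := hS.exists_bound_of_continuousOn hTRc
  obtain ⟨CD, hCD⟩ := hS.exists_bound_of_continuousOn hDc
  let V : ℝ → ℝ → ℝ × ℝ × ℝ × ℝ × ℝ := fun t z => (t, G 0 t z, G 1 t z, G 2 t z, G 3 t z)
  have hVc : Continuous fun p : ℝ × ℝ => V p.1 p.2 := by
    have := hGc 0
    have := hGc 1
    have := hGc 2
    have := hGc 3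
    fun_prop
  have hVz : ∀ t, Continuous (V t) := fun t => hVc.comp (by fun_prop : Continuous fun z => (t, z))
  have hVt : ∀ z, Continuous fun t => V t z := fun z =>
    hVc.comp (by fun_prop : Continuous fun t => (t, z))
  have hcomp : ∀ {F : ℝ × ℝ × ℝ × ℝ × ℝ → ℝ}, ContinuousOn F S → ∀ t ∈ Icc (0 : ℝ) 1,
      Continuous fun z => F (V t z) := fun hF t ht =>
    hF.comp_continuous (hVz t) fun z => hSmem t z ht
  -- The two partial derivatives of `R (V t z)`.
  have hIz : ∀ t z, HasDerivAt (fun y => isoProfile (G 0 t y))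
      (-PhiInv (G 0 t z) * (√t * G 1 t z)) z := fun t z =>
    (hasDerivAt_isoProfile (hG01 t z).1 (hG01 t z).2).comp z (hGz 0 t z)
  have hRz : ∀ t ∈ Icc (0 : ℝ) 1, ∀ z,
      HasDerivAt (fun y => R (V t y)) (√t * (P (V t z) / R (V t z))) z := fun t ht z => by
    have h := (((hIz t z).pow 2).add (((hGz 1 t z).pow 2).const_mul t)).sqrt
      (hRpos2 _ (hSmem t z ht)).ne'
    refine h.congr_deriv ?_
    simp only [P, R, V, Pi.add_apply, Pi.pow_apply]
    field_simp
    ring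
  have hPz : ∀ t z, HasDerivAt (fun y => P (V t y)) (√t * P' (V t z)) z := fun t z => by
    have hA := (hasDerivAt_PhiInv (hG01 t z).1 (hG01 t z).2).comp z (hGz 0 t z)
    have h := (((hIz t z).mul hA).mul (hGz 1 t z)).neg.add
      (((hGz 1 t z).const_mul t).mul (hGz 2 t z))
    refine h.congr_deriv ?_
    have hp : gaussianPDFReal 0 1 (PhiInv (G 0 t z)) ≠ 0 := (isoProfile_pos (G 0 t z)).ne'
    simp only [P', V, isoProfile, Function.comp_apply, Pi.mul_apply]
    field_simp
    ring
  have hRt : ∀ t ∈ Ioo (0 : ℝ) 1, ∀ z, HasDerivAt (fun s => R (V s z))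
      (z / (2 * √t) * (P (V t z) / R (V t z)) + T (V t z) / (2 * R (V t z))) t :=
    fun t ht z => by
    have hIt := (hasDerivAt_isoProfile (hG01 t z).1 (hG01 t z).2).comp t (hGt 0 t z ht.1 ht.2)
    have h := ((hIt.pow 2).add ((hasDerivAt_id t).mul ((hGt 1 t z ht.1 ht.2).pow 2))).sqrt
      (hRpos2 _ (hSmem t z ⟨ht.1.le, ht.2.le⟩)).ne'
    refine h.congr_deriv ?_
    have := Real.sqrt_pos.2 ht.1
    simp only [P, T, R, V, Pi.add_apply, Pi.pow_apply, Pi.mul_apply, Function.comp_apply, id]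
    field_simp
    ring
  -- The mean of `R (V t z)` is nondecreasing in `t`.
  let H : ℝ → ℝ := fun t => ∫ z, R (V t z) ∂gaussianReal 0 1
  have hHd : ∀ t ∈ Ioo (0 : ℝ) 1, HasDerivAt H (∫ z, (z / (2 * √t) * (P (V t z) / R (V t z)) +
      T (V t z) / (2 * R (V t z))) ∂gaussianReal 0 1) t := fun t ht => by
    have htc : t ∈ Icc (0 : ℝ) 1 := ⟨ht.1.le, ht.2.le⟩
    have hpr := hcomp hPRc t htc
    have htr := hcomp hTRc t htc
    refine (hasDerivAt_integral_of_dominated_loc_of_deriv_le (s := Ioo (t / 2) 1)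
      (bound := fun z => |z| / (2 * √(t / 2)) * CP + CT)
      (F' := fun s z => z / (2 * √s) * (P (V s z) / R (V s z)) + T (V s z) / (2 * R (V s z)))
      (Ioo_mem_nhds (by linarith [ht.1]) ht.2) ?_
      (integrable_of_continuous_of_bound (hcomp hRc t htc) fun z => hCR _ (hSmem t z htc))
      (Continuous.aestronglyMeasurable (by fun_prop)) (ae_of_all _ fun z s hs => ?_)
      (((integrable_abs_gaussianReal.div_const _).mul_const _).add (integrable_const _))
      (ae_of_all _ fun z s hs => hRt s ⟨by linarith [hs.1, ht.1], hs.2⟩ z)).2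
    · filter_upwards [Ioo_mem_nhds ht.1 ht.2] with s hs
      exact (hcomp hRc s ⟨hs.1.le, hs.2.le⟩).aestronglyMeasurable
    · have hst := hs.1
      have ht0 := ht.1
      have hsm := hSmem s z ⟨by linarith, hs.2.le⟩
      have h1 : 0 < √(t / 2) := Real.sqrt_pos.2 (by linarith)
      refine (norm_add_le _ _).trans (add_le_add ?_ (hCT _ hsm))
      rw [norm_mul, norm_div, Real.norm_of_nonneg (by positivity : (0 : ℝ) ≤ 2 * √s),
        Real.norm_eq_abs z]
      exact mul_le_mul (by gcongr) (hCP _ hsm) (norm_nonneg _) (by positivity)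
  have hH0 : ∀ t ∈ Ioo (0 : ℝ) 1, 0 ≤ ∫ z, (z / (2 * √t) * (P (V t z) / R (V t z)) +
      T (V t z) / (2 * R (V t z))) ∂gaussianReal 0 1 := fun t ht => by
    have htc : t ∈ Icc (0 : ℝ) 1 := ⟨ht.1.le, ht.2.le⟩
    have hst : 0 < √t := Real.sqrt_pos.2 ht.1
    have hpr := hcomp hPRc t htc
    have hstein := integral_mul_eq_integral_deriv_gaussianReal
      (h := fun z => P (V t z) / R (V t z))
      (h' := fun z => √t * (P' (V t z) / R (V t z) - P (V t z) ^ 2 / R (V t z) ^ 3))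
      (C := CP) (C' := √t * CD)
      (fun z => by
        have hr := hRpos _ (hSmem t z htc)
        refine ((hPz t z).div (hRz t htc z) hr.ne').congr_deriv ?_
        simp only [V] at hr ⊢
        field_simp)
      (continuous_const.mul (hcomp hDc t htc)) (fun z => hCP _ (hSmem t z htc))
      (fun z => by
        rw [abs_mul, abs_of_pos hst]
        exact mul_le_mul_of_nonneg_left (hCD _ (hSmem t z htc)) hst.le)
    have hi1 : Integrable (fun z => z * (P (V t z) / R (V t z))) (gaussianReal 0 1) :=
      (integrable_abs_gaussianReal.const_mul CP).mono'
        (Continuous.aestronglyMeasurable (by fun_prop)) (ae_of_all _ fun z => by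
          rw [norm_mul, mul_comm]
          exact mul_le_mul_of_nonneg_right (hCP _ (hSmem t z htc)) (abs_nonneg _))
    have hi2 : Integrable (fun z => T (V t z) / (2 * R (V t z))) (gaussianReal 0 1) :=
      integrable_of_continuous_of_bound (hcomp hTRc t htc) fun z => hCT _ (hSmem t z htc)
    have hi3 : Integrable (fun z => P' (V t z) / R (V t z) - P (V t z) ^ 2 / R (V t z) ^ 3)
        (gaussianReal 0 1) :=
      integrable_of_continuous_of_bound (hcomp hDc t htc) fun z => hCD _ (hSmem t z htc)
    have e : ∫ z, (z / (2 * √t) * (P (V t z) / R (V t z)) + T (V t z) / (2 * R (V t z)))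
          ∂gaussianReal 0 1 =
        ∫ z, (2⁻¹ * (P' (V t z) / R (V t z) - P (V t z) ^ 2 / R (V t z) ^ 3) +
          T (V t z) / (2 * R (V t z))) ∂gaussianReal 0 1 := by
      rw [integral_add (hi3.const_mul _) hi2, integral_const_mul]
      have e1 : (fun z => z / (2 * √t) * (P (V t z) / R (V t z)) + T (V t z) / (2 * R (V t z))) =
          fun z => (2 * √t)⁻¹ * (z * (P (V t z) / R (V t z))) + T (V t z) / (2 * R (V t z)) := by
        funext z
        ring
      rw [e1, integral_add (hi1.const_mul _) hi2, integral_const_mul, hstein, integral_const_mul]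
      field_simp
    rw [e]
    refine integral_nonneg fun z => ?_
    have hsm := hSmem t z htc
    have hr := hRpos _ hsm
    have hr2 : R (V t z) ^ 2 = isoProfile (G 0 t z) ^ 2 + t * G 1 t z ^ 2 :=
      Real.sq_sqrt (hRpos2 _ hsm).le
    have hcs : P (V t z) ^ 2 ≤ R (V t z) ^ 2 * (P' (V t z) + T (V t z)) := by
      rw [hr2]
      simp only [P, P', T, V]
      nlinarith [mul_nonneg ht.1.le
        (sq_nonneg (isoProfile (G 0 t z) * G 2 t z + G 1 t z * PhiInv (G 0 t z) * G 1 t z))]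
    have e2 : 2⁻¹ * (P' (V t z) / R (V t z) - P (V t z) ^ 2 / R (V t z) ^ 3) +
        T (V t z) / (2 * R (V t z)) =
        (R (V t z) ^ 2 * (P' (V t z) + T (V t z)) - P (V t z) ^ 2) / (2 * R (V t z) ^ 3) := by
      field_simp
      ring
    simp only [Pi.zero_apply]
    rw [e2]
    exact div_nonneg (sub_nonneg.2 hcs) (by positivity)
  have hHc : ContinuousOn H (Icc 0 1) :=
    continuousOn_of_dominated (bound := fun _ => CR)
      (fun t ht => (hcomp hRc t ht).aestronglyMeasurable)
      (fun t ht => ae_of_all _ fun z => hCR _ (hSmem t z ht)) (integrable_const _)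
      (ae_of_all _ fun z => hRc.comp (hVt z).continuousOn fun t ht => hSmem t z ht)
  have hmono : MonotoneOn H (Icc 0 1) := by
    refine monotoneOn_of_deriv_nonneg (convex_Icc 0 1) hHc ?_ ?_ <;> rw [interior_Icc]
    · exact fun t ht => (hHd t ht).differentiableAt.differentiableWithinAt
    · intro t ht
      rw [(hHd t ht).deriv]
      exact hH0 t ht
  have h01 := hmono (left_mem_Icc.2 zero_le_one) (right_mem_Icc.2 zero_le_one) zero_le_one
  simpa [H, R, V, G, heatAvg_zero, heatAvg_one, Real.sqrt_sq (isoProfile_pos _).le] using h01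

end Bobkov

section Tensorization

lemma integral_stdGaussian_succ {d : ℕ} {F : (Fin (d + 1) → ℝ) → ℝ} {C : ℝ} (hc : Continuous F)
    (hb : ∀ x, |F x| ≤ C) :
    ∫ x, F x ∂_root_.stdGaussian (d + 1) =
      ∫ x, ∫ y, F (Fin.cons y x) ∂gaussianReal 0 1 ∂_root_.stdGaussian d := by
  have hmp := (measurePreserving_piFinSuccAbove
    (fun _ : Fin (d + 1) => gaussianReal 0 1) 0).symm
  have hsymm : ∀ p : ℝ × (Fin d → ℝ),
      (MeasurableEquiv.piFinSuccAbove (fun _ : Fin (d + 1) => ℝ) 0).symm p =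
        Fin.cons p.1 p.2 := fun p => by
    simp [MeasurableEquiv.piFinSuccAbove, Fin.insertNthEquiv]
  rw [_root_.stdGaussian, ← hmp.integral_comp', integral_prod_symm]
  · simp only [hsymm]
    rfl
  · simp only [hsymm]
    exact integrable_of_continuous_of_bound (by fun_prop) fun p => hb _

instance isProbabilityMeasure_stdGaussian (d : ℕ) :
    IsProbabilityMeasure (_root_.stdGaussian d) := by
  rw [_root_.stdGaussian]
  infer_instance

/-- Minkowski's integral inequality for the Euclidean norm of finitely many functions. -/
lemma sqrt_sum_sq_integral_le {α ι : Type*} [MeasurableSpace α] [Fintype ι] {μ : Measure α}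
    {b : ι → α → ℝ} (hb : ∀ i, Integrable (b i) μ)
    (hn : Integrable (fun x => √(∑ i, b i x ^ 2)) μ) :
    √(∑ i, (∫ x, b i x ∂μ) ^ 2) ≤ ∫ x, √(∑ i, b i x ^ 2) ∂μ := by
  set m : ι → ℝ := fun i => ∫ x, b i x ∂μ
  set N := √(∑ i, m i ^ 2)
  have hN : N * N = ∑ i, m i * m i := by
    rw [Real.mul_self_sqrt (Finset.sum_nonneg fun i _ => sq_nonneg _)]
    simp only [sq]
  have h1 : N * N ≤ N * ∫ x, √(∑ i, b i x ^ 2) ∂μ := by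
    calc N * N = ∫ x, ∑ i, m i * b i x ∂μ := by
          rw [integral_finsetSum _ fun i _ => (hb i).const_mul _]
          simp only [integral_const_mul, hN, m]
      _ ≤ ∫ x, N * √(∑ i, b i x ^ 2) ∂μ :=
          integral_mono (integrable_finsetSum _ fun i _ => (hb i).const_mul _) (hn.const_mul _)
            fun x => Real.sum_mul_le_sqrt_mul_sqrt _ _ _
      _ = N * ∫ x, √(∑ i, b i x ^ 2) ∂μ := integral_const_mul _ _
  rcases (Real.sqrt_nonneg _ : 0 ≤ N).eq_or_lt with h0 | h0
  · exact h0.symm.le.trans (integral_nonneg fun x => Real.sqrt_nonneg _)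
  · exact le_of_mul_le_mul_left h1 h0

/-- Bobkov's functional isoperimetric inequality for the standard Gaussian measure on `ℝ^d`;
`D j i` is the `j`-th pure partial derivative in direction `i`. -/
lemma isoProfile_integral_le_stdGaussian {ε : ℝ} (hε : 0 < ε) : ∀ (d : ℕ)
    (f : (Fin d → ℝ) → ℝ) (D : ℕ → Fin d → (Fin d → ℝ) → ℝ), (∀ i, D 0 i = f) →
    (∀ j i x, HasDerivAt (fun s => D j i (Function.update x i s)) (D (j + 1) i x) (x i)) →
    Continuous f → (∀ j i, Continuous (D j i)) → (∀ j i, ∃ C, ∀ x, |D j i x| ≤ C) →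
    (∀ x, f x ∈ Icc ε (1 - ε)) →
    isoProfile (∫ x, f x ∂_root_.stdGaussian d) ≤
      ∫ x, √(isoProfile (f x) ^ 2 + ∑ i, D 1 i x ^ 2) ∂_root_.stdGaussian d := by
  intro d
  induction d with
  | zero =>
    intro f D _ _ _ _ _ _
    rw [_root_.stdGaussian, Measure.pi_of_empty]
    simp [Real.sqrt_sq (isoProfile_pos _).le]
  | succ d ih =>
    intro f D hD0 hd hfc hDc hDb hf
    choose C hC using hDb
    have hfb : ∀ x, |f x| ≤ 1 := fun x => abs_le.2
      ⟨by linarith [(hf x).1], by linarith [(hf x).2]⟩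
    have hIc : Continuous fun x => isoProfile (f x) := continuous_iff_continuousAt.2 fun x =>
      (hasDerivAt_isoProfile (hε.trans_le (hf x).1)
        ((hf x).2.trans_lt (by linarith))).continuousAt.comp hfc.continuousAt
    obtain ⟨K, hK⟩ : ∃ K, ∀ x, isoProfile (f x) ≤ K := by
      have hI : ContinuousOn isoProfile (Icc ε (1 - ε)) := fun p hp =>
        (hasDerivAt_isoProfile (hε.trans_le hp.1)
          (hp.2.trans_lt (by linarith))).continuousAt.continuousWithinAt
      obtain ⟨K, hK⟩ := isCompact_Icc.exists_bound_of_continuousOn hI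
      exact ⟨K, fun x => (le_abs_self _).trans (hK _ (hf x))⟩
    have hcons : ∀ x' : Fin d → ℝ, Continuous fun y : ℝ => (Fin.cons y x' : Fin (d + 1) → ℝ) :=
      fun x' => by fun_prop
    have hcons' : ∀ y : ℝ, Continuous fun x' : Fin d → ℝ => (Fin.cons y x' : Fin (d + 1) → ℝ) :=
      fun y => by fun_prop
    let b : (Fin (d + 1) → ℝ) → ℝ := fun x => √(isoProfile (f x) ^ 2 + D 1 0 x ^ 2)
    let n : (Fin (d + 1) → ℝ) → ℝ := fun x => √(isoProfile (f x) ^ 2 + ∑ i, D 1 i x ^ 2)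
    have hbc : Continuous b := by
      have := hDc 1 0
      fun_prop
    have hnc : Continuous n := by
      have := hDc 1
      fun_prop
    have hnb : ∀ x, |n x| ≤ √(K ^ 2 + ∑ i, C 1 i ^ 2) := fun x => by
      rw [abs_of_nonneg (Real.sqrt_nonneg _)]
      refine Real.sqrt_le_sqrt (add_le_add ?_ (Finset.sum_le_sum fun i _ => ?_))
      · exact pow_le_pow_left₀ (isoProfile_pos _).le (hK x) 2
      · exact sq_le_sq' (abs_le.1 (hC 1 i x)).1 (abs_le.1 (hC 1 i x)).2
    have hbn : ∀ x, b x ≤ n x := fun x => by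
      refine Real.sqrt_le_sqrt (add_le_add le_rfl ?_)
      exact Finset.single_le_sum (f := fun i => D 1 i x ^ 2) (fun i _ => sq_nonneg _)
        (Finset.mem_univ 0)
    have hbb : ∀ x, |b x| ≤ √(K ^ 2 + ∑ i, C 1 i ^ 2) := fun x => by
      rw [abs_of_nonneg (Real.sqrt_nonneg _)]
      exact (hbn x).trans ((le_abs_self _).trans (hnb x))
    have hint : ∀ {F : (Fin (d + 1) → ℝ) → ℝ} {c : ℝ}, Continuous F → (∀ x, |F x| ≤ c) →
        ∀ x', Integrable (fun y => F (Fin.cons y x')) (gaussianReal 0 1) := fun hF hc x' =>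
      integrable_of_continuous_of_bound (hF.comp (hcons x')) fun y => hc _
    have hcont : ∀ {F : (Fin (d + 1) → ℝ) → ℝ} {c : ℝ}, Continuous F → (∀ x, |F x| ≤ c) →
        Continuous fun x' => ∫ y, F (Fin.cons y x') ∂gaussianReal 0 1 := fun {F c} hF hc =>
      continuous_of_dominated (bound := fun _ => c)
        (fun x' => (hF.comp (hcons x')).aestronglyMeasurable)
        (fun _ => ae_of_all _ fun _ => hc _) (integrable_const _)
        (ae_of_all _ fun y => hF.comp (hcons' y))
    have hbd : ∀ {F : (Fin (d + 1) → ℝ) → ℝ} {c : ℝ}, (∀ x, |F x| ≤ c) →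
        ∀ x', |∫ y, F (Fin.cons y x') ∂gaussianReal 0 1| ≤ c := fun {F c} hc x' => by
      simpa using norm_integral_le_of_norm_le_const (μ := gaussianReal 0 1)
        (f := fun y => F (Fin.cons y x')) (ae_of_all _ fun y => hc _)
    let g : (Fin d → ℝ) → ℝ := fun x' => ∫ y, f (Fin.cons y x') ∂gaussianReal 0 1
    let E : ℕ → Fin d → (Fin d → ℝ) → ℝ := fun j i x' =>
      ∫ y, D j i.succ (Fin.cons y x') ∂gaussianReal 0 1
    have hg : ∀ x', g x' ∈ Icc ε (1 - ε) := fun x' => by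
      constructor
      · simpa using integral_mono (integrable_const ε) (hint hfc hfb x') fun y => (hf _).1
      · simpa using integral_mono (hint hfc hfb x') (integrable_const (1 - ε)) fun y => (hf _).2
    have hIH := ih g E (fun i => by simp only [E, g, hD0]) (fun j i x' => by
        refine (hasDerivAt_integral_of_dominated_loc_of_deriv_le (μ := gaussianReal 0 1)
          (F := fun s y => D j i.succ (Fin.cons y (Function.update x' i s)))
          (F' := fun s y => D (j + 1) i.succ (Fin.cons y (Function.update x' i s)))
          (x₀ := x' i) (s := univ) (bound := fun _ => C (j + 1) i.succ) univ_mem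
          (Eventually.of_forall fun s => ((hDc _ _).comp (hcons _)).aestronglyMeasurable)
          (hint (hDc _ _) (hC _ _) _) ((hDc _ _).comp (hcons _)).aestronglyMeasurable
          (ae_of_all _ fun y s _ => hC _ _ _) (integrable_const _)
          (ae_of_all _ fun y s _ => ?_)).2.congr_deriv ?_
        · have h := hd j i.succ (Fin.cons y (Function.update x' i s))
          simpa [← Fin.cons_update] using h
        · simp only [Function.update_eq_self, E])
      (hcont hfc hfb) (fun j i => hcont (hDc _ _) (hC _ _))
      (fun j i => ⟨_, hbd (hC _ _)⟩) hg
    have hstep : ∀ x', √(isoProfile (g x') ^ 2 + ∑ i, E 1 i x' ^ 2) ≤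
        ∫ y, n (Fin.cons y x') ∂gaussianReal 0 1 := fun x' => by
      have h1 : isoProfile (g x') ≤ ∫ y, b (Fin.cons y x') ∂gaussianReal 0 1 := by
        have h := isoProfile_integral_le_gaussianReal
          (f := fun j y => D j 0 (Fin.cons y x')) hε (fun j y => by
            have h := hd j 0 (Fin.cons y x')
            simpa using h)
          (fun j => ⟨C j 0, fun y => hC _ _ _⟩) (fun y => by
            rw [hD0]
            exact hf _)
        simpa only [hD0] using h
      have h2 := sqrt_sum_sq_integral_le (μ := gaussianReal 0 1)
        (b := (Fin.cons (fun y => b (Fin.cons y x')) fun i y => D 1 i.succ (Fin.cons y x') :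
          Fin (d + 1) → ℝ → ℝ))
        (Fin.cases (hint hbc hbb x') fun i => hint (hDc _ _) (hC _ _) x')
        (by
          have h := hint hnc hnb x'
          simp only [n, Fin.sum_univ_succ] at h
          simp only [Fin.sum_univ_succ, Fin.cons_zero, Fin.cons_succ, b]
          refine h.congr (ae_of_all _ fun y => ?_)
          simp only
          rw [Real.sq_sqrt (by positivity), add_assoc])
      simp only [Fin.sum_univ_succ, Fin.cons_zero, Fin.cons_succ] at h2
      have h3 : ∀ y, √(b (Fin.cons y x') ^ 2 + ∑ i : Fin d, D 1 i.succ (Fin.cons y x') ^ 2) =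
          n (Fin.cons y x') := fun y => by
        simp only [n, b, Fin.sum_univ_succ]
        rw [Real.sq_sqrt (by positivity), add_assoc]
      simp only [h3] at h2
      refine le_trans (Real.sqrt_le_sqrt (add_le_add ?_ le_rfl)) h2
      exact pow_le_pow_left₀ (isoProfile_pos _).le h1 2
    rw [integral_stdGaussian_succ hfc hfb, integral_stdGaussian_succ hnc hnb]
    refine hIH.trans (integral_mono_of_nonneg (ae_of_all _ fun _ => Real.sqrt_nonneg _) ?_
      (ae_of_all _ hstep))
    exact integrable_of_continuous_of_bound (hcont hnc hnb) (hbd hnb)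

end Tensorization

section SmoothLipschitz

open scoped ContDiff Convolution

lemma exists_contDiff_lipschitz_approx {E : Type*} [NormedAddCommGroup E] [NormedSpace ℝ E]
    [FiniteDimensional ℝ E] [MeasurableSpace E] [BorelSpace E] {F : E → ℝ}
    (hF : LipschitzWith 1 F) (hs : HasCompactSupport F) {ε : ℝ} (hε : 0 < ε) :
    ∃ G : E → ℝ, ContDiff ℝ ∞ G ∧ HasCompactSupport G ∧ LipschitzWith 1 G ∧
      ∀ x, |G x - F x| ≤ ε := by
  let μ : Measure E := Measure.addHaar
  let φ : ContDiffBump (0 : E) := ⟨ε / 2, ε, half_pos hε, half_lt_self hε⟩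
  let G : E → ℝ := φ.normed μ ⋆[ContinuousLinearMap.lsmul ℝ ℝ, μ] F
  have hint : ∀ x, Integrable (fun t => φ.normed μ t * F (x - t)) μ := fun x =>
    ((φ.continuous_normed).mul (hF.continuous.comp (by fun_prop))).integrable_of_hasCompactSupport
      φ.hasCompactSupport_normed.mul_right
  have hG : ∀ x, G x = ∫ t, φ.normed μ t * F (x - t) ∂μ := fun x => by
    simp only [G, convolution_def, ContinuousLinearMap.lsmul_apply, smul_eq_mul]
  have hGs : ContDiff ℝ ∞ G := φ.hasCompactSupport_normed.contDiff_convolution_left _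
    φ.contDiff_normed hF.continuous.locallyIntegrable
  have hGc : HasCompactSupport G := HasCompactSupport.convolution _ φ.hasCompactSupport_normed hs
  refine ⟨G, hGs, hGc, ?_, fun x => ?_⟩
  · refine LipschitzWith.of_dist_le_mul fun x y => ?_
    rw [NNReal.coe_one, one_mul, dist_eq_norm, hG, hG, ← integral_sub (hint x) (hint y)]
    calc ‖∫ t, (φ.normed μ t * F (x - t) - φ.normed μ t * F (y - t)) ∂μ‖
        ≤ ∫ t, φ.normed μ t * dist x y ∂μ := by
          refine norm_integral_le_of_norm_le (φ.integrable_normed.mul_const _)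
            (ae_of_all _ fun t => ?_)
          rw [← mul_sub, norm_mul, Real.norm_of_nonneg (φ.nonneg_normed t)]
          refine mul_le_mul_of_nonneg_left ?_ (φ.nonneg_normed t)
          simpa [dist_eq_norm] using hF.dist_le_mul (x - t) (y - t)
      _ = dist x y := by rw [integral_mul_const, φ.integral_normed, one_mul]
  · refine φ.dist_normed_convolution_le hF.continuous.aestronglyMeasurable fun y hy => ?_
    have h := hF.dist_le_mul y x
    rw [NNReal.coe_one, one_mul] at h
    exact h.trans (Metric.mem_ball.1 hy).le

/-- The class of smooth functions that are constant outside a compact set. -/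
def IsSmoothEventuallyConst {E : Type*} [NormedAddCommGroup E] [NormedSpace ℝ E]
    (v : E → ℝ) : Prop :=
  ContDiff ℝ ∞ v ∧ ∃ c, HasCompactSupport fun x => v x - c

namespace IsSmoothEventuallyConst

variable {E : Type*} [NormedAddCommGroup E] [NormedSpace ℝ E] {v : E → ℝ}

lemma exists_bound (h : IsSmoothEventuallyConst v) : ∃ C, ∀ x, |v x| ≤ C := by
  obtain ⟨hv, c, hc⟩ := h
  obtain ⟨C, hC⟩ := hc.exists_bound_of_continuous (hv.continuous.sub continuous_const)
  refine ⟨C + |c|, fun x => ?_⟩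
  have := abs_add_le (v x - c) c
  rw [sub_add_cancel] at this
  exact this.trans (add_le_add_left (hC x) _)

lemma fderiv_apply (h : IsSmoothEventuallyConst v) (e : E) :
    IsSmoothEventuallyConst fun x => fderiv ℝ v x e := by
  obtain ⟨hv, c, hc⟩ := h
  refine ⟨(hv.fderiv_right (m := ∞) (by simp)).clm_apply contDiff_const, 0, ?_⟩
  have h1 := hc.fderiv_apply (𝕜 := ℝ) e
  simpa [fderiv_sub_const] using h1

lemma comp_left (h : IsSmoothEventuallyConst v) {g : ℝ → ℝ} (hg : ContDiff ℝ ∞ g) :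
    IsSmoothEventuallyConst fun x => g (v x) := by
  obtain ⟨hv, c, hc⟩ := h
  refine ⟨hg.comp hv, g c, ?_⟩
  have h1 := hc.comp_left (g := fun t => g (t + c) - g c) (by simp)
  simpa [Function.comp_def] using h1

end IsSmoothEventuallyConst

lemma contDiff_Phi : ContDiff ℝ ∞ Phi := by
  rw [contDiff_infty_iff_deriv, funext fun x => (hasDerivAt_Phi x).deriv]
  refine ⟨fun x => (hasDerivAt_Phi x).differentiableAt, ?_⟩
  rw [gaussianPDFReal_def]
  fun_prop

lemma hasDerivAt_comp_toLp_update {d : ℕ} {v : EuclideanSpace ℝ (Fin d) → ℝ}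
    (hv : Differentiable ℝ v) (i : Fin d) (x : Fin d → ℝ) :
    HasDerivAt (fun s => v (WithLp.toLp 2 (Function.update x i s)))
      (fderiv ℝ v (WithLp.toLp 2 x) (EuclideanSpace.single i 1)) (x i) := by
  have h1 := (PiLp.continuousLinearEquiv 2 ℝ fun _ : Fin d => ℝ).symm.hasFDerivAt.comp_hasDerivAt
    (x i) (hasDerivAt_update x i (x i))
  have h2 := (hv (WithLp.toLp 2 x)).hasFDerivAt
  have h3 : HasFDerivAt v (fderiv ℝ v (WithLp.toLp 2 x))
      (((PiLp.continuousLinearEquiv 2 ℝ fun _ : Fin d => ℝ).symm ∘ Function.update x i) (x i)) := by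
    simpa using h2
  exact h3.comp_hasDerivAt (x i) h1

lemma sum_sq_apply_single_le {d : ℕ} (L : EuclideanSpace ℝ (Fin d) →L[ℝ] ℝ) :
    ∑ i, L (EuclideanSpace.single i 1) ^ 2 ≤ ‖L‖ ^ 2 := by
  let w : EuclideanSpace ℝ (Fin d) := WithLp.toLp 2 fun i => L (EuclideanSpace.single i 1)
  have hw : ‖w‖ ^ 2 = ∑ i, L (EuclideanSpace.single i 1) ^ 2 := by
    rw [EuclideanSpace.real_norm_sq_eq]
  have hLw : L w = ‖w‖ ^ 2 := by
    have : w = ∑ i, w i • EuclideanSpace.single i (1 : ℝ) := by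
      ext j
      simp [Finset.sum_apply, Pi.single_apply]
    rw [hw]
    nth_rewrite 1 [this]
    simp [map_sum, sq, w]
  rw [← hw]
  have h := L.le_opNorm w
  rw [hLw, norm_pow, norm_norm] at h
  refine pow_le_pow_left₀ (norm_nonneg _) ?_ 2
  rcases (norm_nonneg w).eq_or_lt with h0 | h0
  · rw [← h0]
    exact norm_nonneg L
  · exact le_of_mul_le_mul_right (by rwa [← sq]) h0

end SmoothLipschitz
section Isoperimetry

open scoped ContDiff

variable {d : ℕ}

lemma gaussianPDFReal_std_le (y : ℝ) : gaussianPDFReal 0 1 y ≤ gaussianPDFReal 0 1 0 := by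
  simp only [gaussianPDFReal_def]
  refine mul_le_mul_of_nonneg_left (Real.exp_le_exp.2 ?_) (by positivity)
  have := sq_nonneg y
  simp only [sub_zero, NNReal.coe_one, mul_one]
  linarith

lemma isoProfile_integral_Phi_le {H : EuclideanSpace ℝ (Fin d) → ℝ} (hH : ContDiff ℝ ∞ H)
    (hs : HasCompactSupport H) (hl : LipschitzWith 1 H) {l : ℝ} (hl0 : 0 < l) (s : ℝ) :
    isoProfile (∫ x, Phi (l * (H (WithLp.toLp 2 x) - s)) ∂_root_.stdGaussian d) ≤
      (1 + l) * ∫ x, gaussianPDFReal 0 1 (l * (H (WithLp.toLp 2 x) - s))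
        ∂_root_.stdGaussian d := by
  let T : Fin d → (EuclideanSpace ℝ (Fin d) → ℝ) → EuclideanSpace ℝ (Fin d) → ℝ :=
    fun i v x => fderiv ℝ v x (EuclideanSpace.single i 1)
  let u : EuclideanSpace ℝ (Fin d) → ℝ := fun x => Phi (l * (H x - s))
  have hconst : IsSmoothEventuallyConst H := ⟨hH, 0, by simpa using hs⟩
  have hu : IsSmoothEventuallyConst u :=
    hconst.comp_left (g := fun t => Phi (l * (t - s))) (contDiff_Phi.comp (by fun_prop))
  have hT : ∀ j i, IsSmoothEventuallyConst ((T i)^[j] u) := fun j i => by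
    induction j with
    | zero => exact hu
    | succ j ih =>
      rw [Function.iterate_succ_apply']
      exact ih.fderiv_apply _
  have htoLp : Continuous (WithLp.toLp 2 : (Fin d → ℝ) → EuclideanSpace ℝ (Fin d)) :=
    PiLp.continuous_toLp 2 _
  obtain ⟨M, hM⟩ := hconst.exists_bound
  have hup : ∀ x, u x ∈ Icc (Phi (l * (-M - s))) (Phi (l * (M - s))) := fun x =>
    ⟨strictMono_Phi.monotone (mul_le_mul_of_nonneg_left
      (sub_le_sub_right (abs_le.1 (hM x)).1 s) hl0.le),
     strictMono_Phi.monotone (mul_le_mul_of_nonneg_left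
      (sub_le_sub_right (abs_le.1 (hM x)).2 s) hl0.le)⟩
  have hgrad : ∀ x i, T i u x =
      gaussianPDFReal 0 1 (l * (H x - s)) * l * fderiv ℝ H x (EuclideanSpace.single i 1) :=
    fun x i => by
      have h1 := (hH.differentiable (by simp) x).hasFDerivAt
      have h2 := (hasDerivAt_Phi (l * (H x - s))).comp_hasFDerivAt x
        ((h1.sub_const s).const_mul l)
      simp only [T]
      rw [show u = Phi ∘ fun y => l * (H y - s) from rfl, h2.fderiv]
      simp [mul_assoc]
  have hB := isoProfile_integral_le_stdGaussian
    (ε := min (Phi (l * (-M - s))) (1 - Phi (l * (M - s))))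
    (lt_min (Phi_pos _) (by linarith [Phi_lt_one (l * (M - s))])) d
    (fun x => u (WithLp.toLp 2 x)) (fun j i x => (T i)^[j] u (WithLp.toLp 2 x)) (fun i => rfl)
    (fun j i x => by
      rw [Function.iterate_succ_apply']
      exact hasDerivAt_comp_toLp_update ((hT j i).1.differentiable (by simp)) i x)
    (hu.1.continuous.comp htoLp) (fun j i => (hT j i).1.continuous.comp htoLp)
    (fun j i => (hT j i).exists_bound.imp fun C hC x => hC _)
    (fun x => ⟨(min_le_left _ _).trans (hup _).1,
      (hup _).2.trans (by linarith [min_le_right (Phi (l * (-M - s))) (1 - Phi (l * (M - s)))])⟩)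
  refine hB.trans ?_
  rw [← integral_const_mul]
  refine integral_mono_of_nonneg (ae_of_all _ fun _ => Real.sqrt_nonneg _) ?_
    (ae_of_all _ fun x => ?_)
  · refine integrable_of_continuous_of_bound (C := (1 + l) * gaussianPDFReal 0 1 0) ?_ fun x => ?_
    · have := continuous_gaussianPDFReal_std
      have := hH.continuous
      fun_prop
    · rw [abs_of_nonneg (mul_nonneg (by linarith) (gaussianPDFReal_nonneg 0 1 _))]
      exact mul_le_mul_of_nonneg_left (gaussianPDFReal_std_le _) (by linarith)
  · set p := gaussianPDFReal 0 1 (l * (H (WithLp.toLp 2 x) - s))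
    have hp : 0 ≤ p := gaussianPDFReal_nonneg 0 1 _
    have hsum : ∑ i, (fderiv ℝ H (WithLp.toLp 2 x) (EuclideanSpace.single i 1)) ^ 2 ≤ 1 := by
      refine (sum_sq_apply_single_le _).trans ?_
      have := norm_fderiv_le_of_lipschitz ℝ (x₀ := WithLp.toLp 2 x) hl
      simpa using pow_le_pow_left₀ (norm_nonneg _) this 2
    simp only [Function.iterate_one, hgrad, u, isoProfile_Phi, mul_pow]
    rw [← Finset.mul_sum]
    refine Real.sqrt_le_iff.2 ⟨mul_nonneg (by linarith) hp, ?_⟩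
    have h1 := mul_le_mul_of_nonneg_left hsum (by positivity : 0 ≤ p ^ 2 * l ^ 2)
    nlinarith [mul_nonneg (sq_nonneg p) hl0.le]

lemma integral_Phi_le_of_le {H : EuclideanSpace ℝ (Fin d) → ℝ} (hH : ContDiff ℝ ∞ H)
    (hs : HasCompactSupport H) (hl : LipschitzWith 1 H) {l b : ℝ} (hl0 : 0 < l) {s t : ℝ}
    (hst : s ≤ t)
    (hb : ∫ x, Phi (l * (H (WithLp.toLp 2 x) - s)) ∂_root_.stdGaussian d ≤ Phi b) :
    ∫ x, Phi (l * (H (WithLp.toLp 2 x) - t)) ∂_root_.stdGaussian d ≤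
      Phi (b - l / (1 + l) * (t - s)) := by
  let m : ℝ → ℝ := fun s => ∫ x, Phi (l * (H (WithLp.toLp 2 x) - s)) ∂_root_.stdGaussian d
  let J : ℝ → ℝ := fun s =>
    ∫ x, gaussianPDFReal 0 1 (l * (H (WithLp.toLp 2 x) - s)) ∂_root_.stdGaussian d
  have hHc := hH.continuous
  have hPc := continuous_Phi
  have hgc := continuous_gaussianPDFReal_std
  have hPint : ∀ s, Integrable (fun x => Phi (l * (H (WithLp.toLp 2 x) - s)))
      (_root_.stdGaussian d) := fun s =>
    integrable_of_continuous_of_bound (C := 1) (by fun_prop) fun x => by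
      rw [abs_of_pos (Phi_pos _)]
      exact (Phi_lt_one _).le
  have hm0 : ∀ s, 0 < m s := fun s => by
    refine (integral_pos_iff_support_of_nonneg (fun x => (Phi_pos _).le) (hPint s)).2 ?_
    rw [Function.support_eq_univ fun x => (Phi_pos _).ne']
    simp
  have hm1 : ∀ s, m s < 1 := fun s => by
    have h : 0 < ∫ x, (1 - Phi (l * (H (WithLp.toLp 2 x) - s))) ∂_root_.stdGaussian d := by
      refine (integral_pos_iff_support_of_nonneg (fun x => sub_nonneg.2 (Phi_lt_one _).le)
        ((integrable_const _).sub (hPint s))).2 ?_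
      rw [Function.support_eq_univ fun x => (sub_pos.2 (Phi_lt_one _)).ne']
      simp
    rw [integral_sub (integrable_const _) (hPint s)] at h
    simpa using h
  have hmd : ∀ s, HasDerivAt m (-l * J s) s := fun s => by
    refine (hasDerivAt_integral_of_dominated_loc_of_deriv_le (μ := _root_.stdGaussian d)
      (F := fun s x => Phi (l * (H (WithLp.toLp 2 x) - s)))
      (F' := fun s x => -l * gaussianPDFReal 0 1 (l * (H (WithLp.toLp 2 x) - s)))
      (x₀ := s) (s := univ) (bound := fun _ => l * gaussianPDFReal 0 1 0) univ_mem
      (Eventually.of_forall fun s => (hPint s).aestronglyMeasurable) (hPint s)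
      (Continuous.aestronglyMeasurable (by fun_prop))
      (ae_of_all _ fun x s _ => ?_) (integrable_const _)
      (ae_of_all _ fun x s _ => ?_)).2.congr_deriv ?_
    · rw [norm_mul, norm_neg, Real.norm_of_nonneg hl0.le,
        Real.norm_of_nonneg (gaussianPDFReal_nonneg 0 1 _)]
      exact mul_le_mul_of_nonneg_left (gaussianPDFReal_std_le _) hl0.le
    · refine ((hasDerivAt_Phi _).comp s
        (((hasDerivAt_id s).const_sub (H (WithLp.toLp 2 x))).const_mul l)).congr_deriv ?_
      simp
      ring
    · exact integral_const_mul _ _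
  have hanti : Antitone fun s => PhiInv (m s) + l / (1 + l) * s := by
    refine antitone_of_hasDerivAt_nonpos
      (f' := fun s => (isoProfile (m s))⁻¹ * (-l * J s) + l / (1 + l))
      (fun s => ?_) fun s => ?_
    · refine (((hasDerivAt_PhiInv (hm0 s) (hm1 s)).comp s (hmd s)).add
        ((hasDerivAt_id s).const_mul (l / (1 + l)))).congr_deriv ?_
      simp [isoProfile]
    · have h := isoProfile_integral_Phi_le hH hs hl hl0 s
      have hI := isoProfile_pos (m s)
      have : l / (1 + l) ≤ (isoProfile (m s))⁻¹ * (l * J s) := by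
        rw [div_le_iff₀ (by linarith), inv_mul_eq_div, div_mul_eq_mul_div, le_div_iff₀ hI]
        calc l * isoProfile (m s) ≤ l * ((1 + l) * J s) := mul_le_mul_of_nonneg_left h hl0.le
          _ = l * J s * (1 + l) := by ring
      show _ ≤ (0 : ℝ)
      linarith
  have h1 := hanti hst
  have h2 : PhiInv (m s) ≤ b := by
    rw [← strictMono_Phi.le_iff_le, Phi_PhiInv (hm0 s) (hm1 s)]
    exact hb
  change m t ≤ _
  rw [← Phi_PhiInv (hm0 t) (hm1 t)]
  refine strictMono_Phi.monotone ?_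
  simp only at h1
  linarith

/-- The points of the ball of radius `R` at Euclidean distance at least `r` from the complement
of `U`. -/
def deepPart (U : Set (Fin d → ℝ)) (r R : ℝ) : Set (Fin d → ℝ) :=
  {x | r ≤ Metric.infDist (WithLp.toLp 2 x : EuclideanSpace ℝ (Fin d)) (WithLp.ofLp ⁻¹' Uᶜ) ∧
    ‖(WithLp.toLp 2 x : EuclideanSpace ℝ (Fin d))‖ ≤ R}

lemma measurableSet_deepPart (U : Set (Fin d → ℝ)) (r R : ℝ) :
    MeasurableSet (deepPart U r R) := by
  have htoLp : Continuous (WithLp.toLp 2 : (Fin d → ℝ) → EuclideanSpace ℝ (Fin d)) :=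
    PiLp.continuous_toLp 2 _
  exact ((isClosed_le continuous_const ((Metric.continuous_infDist_pt _).comp htoLp)).inter
    (isClosed_le htoLp.norm continuous_const)).measurableSet

lemma measureReal_deepPart_mul_le {U : Set (Fin d → ℝ)} (hU : MeasurableSet U) {r R ε l b : ℝ}
    (hε : 0 < ε) (hεr : 4 * ε ≤ r) (hl0 : 0 < l)
    (hb : (_root_.stdGaussian d).real U + Phi (-(l * ε)) ≤ Phi b) :
    (_root_.stdGaussian d).real (deepPart U r R) * Phi (l * ε) ≤
      Phi (b - l / (1 + l) * (r - 4 * ε)) := by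
  let A : Set (EuclideanSpace ℝ (Fin d)) := WithLp.ofLp ⁻¹' Uᶜ
  let F : EuclideanSpace ℝ (Fin d) → ℝ := fun x => min (Metric.infDist x A) (max (R + r - ‖x‖) 0)
  have hF : LipschitzWith 1 F := by
    have h1 : LipschitzWith 1 fun x : EuclideanSpace ℝ (Fin d) => R + r - ‖x‖ := by
      refine LipschitzWith.of_dist_le_mul fun x y => ?_
      rw [NNReal.coe_one, one_mul, Real.dist_eq, dist_eq_norm, sub_sub_sub_cancel_left, abs_sub_comm]
      exact abs_norm_sub_norm_le x y
    simpa using (Metric.lipschitz_infDist_pt A).min (h1.max_const 0)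
  have hFs : HasCompactSupport F := by
    refine HasCompactSupport.of_support_subset_isCompact
      (isCompact_closedBall (0 : EuclideanSpace ℝ (Fin d)) (R + r)) fun x hx => ?_
    rw [mem_closedBall_zero_iff]
    by_contra! h
    refine hx ?_
    simp only [F]
    rw [max_eq_right (by linarith), min_eq_right Metric.infDist_nonneg]
  obtain ⟨H, hH, hHs, hl, hHF⟩ := exists_contDiff_lipschitz_approx hF hFs hε
  have hHc := hH.continuous
  have hPc := continuous_Phi
  have hPint : ∀ s, Integrable (fun x => Phi (l * (H (WithLp.toLp 2 x) - s)))
      (_root_.stdGaussian d) := fun s =>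
    integrable_of_continuous_of_bound (C := 1) (by fun_prop) fun x => by
      rw [abs_of_pos (Phi_pos _)]
      exact (Phi_lt_one _).le
  have hupper : ∫ x, Phi (l * (H (WithLp.toLp 2 x) - 2 * ε)) ∂_root_.stdGaussian d ≤ Phi b := by
    refine le_trans ?_ hb
    calc ∫ x, Phi (l * (H (WithLp.toLp 2 x) - 2 * ε)) ∂_root_.stdGaussian d
        ≤ ∫ x, (U.indicator (fun _ => (1 : ℝ)) x + Phi (-(l * ε))) ∂_root_.stdGaussian d := by
          refine integral_mono (hPint _) (((integrable_const _).indicator hU).add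
            (integrable_const _)) fun x => ?_
          by_cases hx : x ∈ U
          · simp only [indicator_of_mem hx]
            linarith [Phi_lt_one (l * (H (WithLp.toLp 2 x) - 2 * ε)), Phi_pos (-(l * ε))]
          · simp only [indicator_of_notMem hx, zero_add]
            refine strictMono_Phi.monotone ?_
            have h0 : F (WithLp.toLp 2 x) = 0 := by
              have : Metric.infDist (WithLp.toLp 2 x) A = 0 := Metric.infDist_zero_of_mem hx
              simp only [F]
              rw [this, min_eq_left (le_max_right _ _)]
            have h1 := hHF (WithLp.toLp 2 x)
            rw [h0, sub_zero] at h1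
            have h2 := mul_le_mul_of_nonneg_left (abs_le.1 h1).2 hl0.le
            linarith
      _ = (_root_.stdGaussian d).real U + Phi (-(l * ε)) := by
          rw [integral_add ((integrable_const _).indicator hU) (integrable_const _),
            integral_indicator hU]
          simp
  have hlower : (_root_.stdGaussian d).real (deepPart U r R) * Phi (l * ε) ≤
      ∫ x, Phi (l * (H (WithLp.toLp 2 x) - (r - 2 * ε))) ∂_root_.stdGaussian d := by
    have hD := measurableSet_deepPart U r R
    calc (_root_.stdGaussian d).real (deepPart U r R) * Phi (l * ε)
        = ∫ x, (deepPart U r R).indicator (fun _ => Phi (l * ε)) x ∂_root_.stdGaussian d := by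
          rw [integral_indicator hD]
          simp
      _ ≤ _ := by
          refine integral_mono ((integrable_const _).indicator hD) (hPint _) fun x => ?_
          by_cases hx : x ∈ deepPart U r R
          · simp only [indicator_of_mem hx]
            refine strictMono_Phi.monotone (mul_le_mul_of_nonneg_left ?_ hl0.le)
            have h0 : r ≤ F (WithLp.toLp 2 x) :=
              le_min hx.1 (le_max_of_le_left (by linarith [hx.2]))
            linarith [(abs_le.1 (hHF (WithLp.toLp 2 x))).1]
          · simp only [indicator_of_notMem hx]
            exact (Phi_pos _).le
  refine hlower.trans ?_
  have h := integral_Phi_le_of_le hH hHs hl hl0 (t := r - 2 * ε) (by linarith) hupper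
  rwa [show r - 2 * ε - 2 * ε = r - 4 * ε by ring] at h

lemma measureReal_deepPart_le {U : Set (Fin d → ℝ)} (hU : MeasurableSet U) {r R b : ℝ}
    (hr : 0 < r) (hb : (_root_.stdGaussian d).real U < Phi b) :
    (_root_.stdGaussian d).real (deepPart U r R) ≤ Phi (b - r) := by
  have hPc := continuous_Phi
  have hlε : ∀ ε, 0 < ε → 4 * ε ≤ r →
      (_root_.stdGaussian d).real (deepPart U r R) ≤ Phi (b - (r - 4 * ε)) := fun ε hε hεr => by
    have hatTop : Tendsto (fun l : ℝ => l * ε) atTop atTop := tendsto_id.atTop_mul_const hε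
    have h1 : Tendsto (fun l : ℝ => (_root_.stdGaussian d).real (deepPart U r R) * Phi (l * ε))
        atTop (𝓝 ((_root_.stdGaussian d).real (deepPart U r R) * 1)) :=
      (tendsto_Phi_atTop.comp hatTop).const_mul _
    have hk : Tendsto (fun l : ℝ => l / (1 + l)) atTop (𝓝 1) := by
      have h : Tendsto (fun l : ℝ => 1 - (1 + l)⁻¹) atTop (𝓝 (1 - 0)) :=
        (tendsto_inv_atTop_zero.comp (tendsto_atTop_add_const_left _ 1 tendsto_id)).const_sub 1
      rw [sub_zero] at h
      refine h.congr' ?_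
      filter_upwards [eventually_gt_atTop 0] with l hl
      field_simp
      ring
    have h2 : Tendsto (fun l : ℝ => Phi (b - l / (1 + l) * (r - 4 * ε))) atTop
        (𝓝 (Phi (b - 1 * (r - 4 * ε)))) :=
      (hPc.tendsto _).comp ((hk.mul_const _).const_sub b)
    have h3 : Tendsto (fun l : ℝ => (_root_.stdGaussian d).real U + Phi (-(l * ε))) atTop
        (𝓝 ((_root_.stdGaussian d).real U + 0)) :=
      (tendsto_Phi_atBot.comp (tendsto_neg_atTop_atBot.comp hatTop)).const_add _
    rw [add_zero] at h3
    rw [mul_one] at h1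
    rw [one_mul] at h2
    refine le_of_tendsto_of_tendsto h1 h2 ?_
    filter_upwards [h3.eventually (gt_mem_nhds hb), eventually_gt_atTop 0] with l hl hl0
    exact measureReal_deepPart_mul_le hU hε hεr hl0 hl.le
  have h4 : Tendsto (fun ε : ℝ => Phi (b - (r - 4 * ε))) (𝓝[>] 0) (𝓝 (Phi (b - r))) := by
    have h : Continuous fun ε : ℝ => Phi (b - (r - 4 * ε)) := by fun_prop
    simpa using (h.tendsto 0).mono_left nhdsWithin_le_nhds
  refine ge_of_tendsto h4 ?_
  filter_upwards [Ioo_mem_nhdsGT (show (0 : ℝ) < r / 4 by linarith)] with ε hε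
  exact hlε ε hε.1 (by linarith [hε.2])

/-- Gaussian concentration: the points that stay in a set `U` of measure at most `1 / 2` under
every perturbation of Euclidean norm at most `r`. -/
lemma measureReal_forall_l2_le_imp_mem_le {U : Set (Fin d → ℝ)} (hU : MeasurableSet U)
    (hhalf : (_root_.stdGaussian d).real U ≤ 1 / 2) {r : ℝ} (hr : 0 ≤ r) :
    (_root_.stdGaussian d).real {z | ∀ z', l2 (z - z') ≤ r → z' ∈ U} ≤
      Real.exp (-r ^ 2 / 2) * (_root_.stdGaussian d).real U := by
  have hsub : {z | ∀ z', l2 (z - z') ≤ r → z' ∈ U} ⊆ U := fun z hz =>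
    hz z (by simpa [l2] using hr)
  rcases hr.eq_or_lt with rfl | hr0
  · simpa using measureReal_mono hsub
  rcases (measureReal_nonneg (μ := _root_.stdGaussian d) (s := U)).eq_or_lt with h0 | h0
  · rw [← h0, mul_zero]
    exact (measureReal_mono hsub).trans h0.symm.le
  obtain ⟨a, ha⟩ := exists_Phi_eq h0 (hhalf.trans_lt (by norm_num))
  have hne : (WithLp.ofLp ⁻¹' Uᶜ : Set (EuclideanSpace ℝ (Fin d))).Nonempty := by
    have : U ≠ univ := by
      rintro rfl
      simp at hhalf
      norm_num at hhalf
    obtain ⟨z, hz⟩ := (ne_univ_iff_exists_notMem U).1 this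
    exact ⟨WithLp.toLp 2 z, hz⟩
  have hcover : {z | ∀ z', l2 (z - z') ≤ r → z' ∈ U} ⊆ ⋃ n : ℕ, deepPart U r n := fun z hz => by
    obtain ⟨n, hn⟩ := exists_nat_ge ‖(WithLp.toLp 2 z : EuclideanSpace ℝ (Fin d))‖
    refine mem_iUnion.2 ⟨n, (Metric.le_infDist hne).2 fun y hy => ?_, hn⟩
    by_contra! h
    refine hy (hz _ (le_trans (le_of_eq ?_) h.le))
    simp [l2, EuclideanSpace.dist_eq, Real.dist_eq, sq_abs]
  have hmono : Monotone fun n : ℕ => deepPart U r n := fun m n h x hx =>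
    ⟨hx.1, hx.2.trans (by exact_mod_cast h)⟩
  have hlim : Tendsto (fun n : ℕ => (_root_.stdGaussian d).real (deepPart U r n)) atTop
      (𝓝 ((_root_.stdGaussian d).real (⋃ n : ℕ, deepPart U r n))) :=
    (ENNReal.tendsto_toReal (measure_ne_top _ _)).comp (tendsto_measure_iUnion_atTop hmono)
  have hb : ∀ b, a < b → (_root_.stdGaussian d).real (⋃ n : ℕ, deepPart U r n) ≤ Phi (b - r) :=
    fun b hab => le_of_tendsto' hlim fun n =>
      measureReal_deepPart_le hU hr0 (ha ▸ strictMono_Phi hab)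
  have hlimb : Tendsto (fun b => Phi (b - r)) (𝓝[>] a) (𝓝 (Phi (a - r))) := by
    have hPc := continuous_Phi
    have h : Continuous fun b => Phi (b - r) := by fun_prop
    exact (h.tendsto a).mono_left nhdsWithin_le_nhds
  calc (_root_.stdGaussian d).real {z | ∀ z', l2 (z - z') ≤ r → z' ∈ U}
      ≤ (_root_.stdGaussian d).real (⋃ n : ℕ, deepPart U r n) := measureReal_mono hcover
    _ ≤ Phi (a - r) := ge_of_tendsto hlimb (eventually_mem_nhdsWithin.mono hb)
    _ ≤ Real.exp (-r ^ 2 / 2) * Phi a :=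
        Phi_sub_le (Phi_le_half (ha.trans_le hhalf)) hr
    _ = Real.exp (-r ^ 2 / 2) * (_root_.stdGaussian d).real U := by rw [ha]

end Isoperimetry

/-- Transferability of perturbations (Theorem 3): for two partitions that agree except on
a set of measure at most `δ`, with `ν(B_i(f)) + δ ≤ 1/2`, there is, with high probability,
a single small latent perturbation changing the cell of both partitions. -/
theorem transferability (d K : ℕ)
    (Bf Bh : Fin K → Set (Fin d → ℝ))
    (hmeasf : ∀ i, MeasurableSet (Bf i)) (hmeash : ∀ i, MeasurableSet (Bh i))
    (hdisjf : Pairwise (Function.onFun Disjoint Bf))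
    (hdisjh : Pairwise (Function.onFun Disjoint Bh))
    (hcoverf : (⋃ i, Bf i) = Set.univ) (hcoverh : (⋃ i, Bh i) = Set.univ)
    (δ : ℝ)
    (hδ : ((stdGaussian d) {z | ∃ i, z ∈ Bf i ∧ z ∉ Bh i}).toReal ≤ δ)
    (hhalf : ∀ i, ((stdGaussian d) (Bf i)).toReal + δ ≤ 1 / 2)
    (η : ℝ) (hη : 0 ≤ η) :
    ((stdGaussian d)
        {z | ∃ z', l2 (z - z') ≤ η ∧
          (∀ i, z ∈ Bf i → z' ∉ Bf i) ∧ (∀ i, z ∈ Bh i → z' ∉ Bh i)}).toReal ≥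
      1 - Real.sqrt (π / 2) * Real.exp (-η ^ 2 / 2) - 2 * δ := by
  let ν := _root_.stdGaussian d
  let U : Fin K → Set (Fin d → ℝ) := fun i => Bf i ∪ Bh i
  let N : Set (Fin d → ℝ) := {z | ∃ i, z ∈ Bf i ∧ z ∉ Bh i}
  have hN : ν.real N ≤ δ := hδ
  have hfun : ∀ {B : Fin K → Set (Fin d → ℝ)}, Pairwise (Function.onFun Disjoint B) →
      ∀ {i j z}, z ∈ B i → z ∈ B j → i = j := fun hB i j z hi hj => by
    by_contra h
    exact Set.disjoint_left.1 (hB h) hi hj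
  have hdiffN : ∀ i, Bh i \ Bf i ⊆ N := fun i z hz => by
    obtain ⟨j, hj⟩ := mem_iUnion.1 (hcoverf.ge (mem_univ z))
    refine ⟨j, hj, fun hj' => hz.2 ?_⟩
    rwa [hfun hdisjh hz.1 hj']
  have hUle : ∀ i, ν.real (U i) ≤ ν.real (Bf i) + ν.real (Bh i \ Bf i) := fun i => by
    simpa only [U, union_sdiff_self] using measureReal_union_le (μ := ν) (Bf i) (Bh i \ Bf i)
  have hUhalf : ∀ i, ν.real (U i) ≤ 1 / 2 := fun i =>
    (hUle i).trans ((add_le_add_right ((measureReal_mono (hdiffN i)).trans hN) _).trans (hhalf i))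
  have hUsum : ∑ i, ν.real (U i) ≤ 1 + δ := by
    have h1 : ∑ i, ν.real (Bf i) = 1 := by
      rw [← measureReal_iUnion_fintype hdisjf hmeasf, hcoverf, probReal_univ]
    have h2 : ∑ i, ν.real (Bh i \ Bf i) ≤ δ := by
      rw [← measureReal_iUnion_fintype
        (fun i j h => (hdisjh h).mono sdiff_subset sdiff_subset)
        fun i => (hmeash i).diff (hmeasf i)]
      exact (measureReal_mono (iUnion_subset hdiffN)).trans hN
    calc ∑ i, ν.real (U i) ≤ ∑ i, (ν.real (Bf i) + ν.real (Bh i \ Bf i)) :=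
          Finset.sum_le_sum fun i _ => hUle i
      _ ≤ 1 + δ := by
          rw [Finset.sum_add_distrib]
          linarith
  set E : Set (Fin d → ℝ) := {z | ∃ z', l2 (z - z') ≤ η ∧
    (∀ i, z ∈ Bf i → z' ∉ Bf i) ∧ (∀ i, z ∈ Bh i → z' ∉ Bh i)}
  have hcompl : Eᶜ ⊆ N ∪ ⋃ i, {z | ∀ z', l2 (z - z') ≤ η → z' ∈ U i} := fun z hz => by
    by_cases hzN : z ∈ N
    · exact Or.inl hzN
    obtain ⟨i, hi⟩ := mem_iUnion.1 (hcoverf.ge (mem_univ z))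
    have hi' : z ∈ Bh i := by
      by_contra h
      exact hzN ⟨i, hi, h⟩
    refine Or.inr (mem_iUnion.2 ⟨i, fun z' hz' => ?_⟩)
    by_contra h
    refine hz ⟨z', hz', fun j hj h' => h (Or.inl ?_), fun j hj h' => h (Or.inr ?_)⟩
    · rwa [hfun hdisjf hi hj]
    · rwa [hfun hdisjh hi' hj]
  have hbad : ν.real Eᶜ ≤ δ + Real.exp (-η ^ 2 / 2) * (1 + δ) := by
    calc ν.real Eᶜ ≤ ν.real N + ν.real (⋃ i, {z | ∀ z', l2 (z - z') ≤ η → z' ∈ U i}) :=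
          (measureReal_mono hcompl).trans (measureReal_union_le _ _)
      _ ≤ δ + ∑ i, ν.real {z | ∀ z', l2 (z - z') ≤ η → z' ∈ U i} :=
          add_le_add hN (measureReal_iUnion_fintype_le _)
      _ ≤ δ + ∑ i, Real.exp (-η ^ 2 / 2) * ν.real (U i) :=
          add_le_add_right (Finset.sum_le_sum fun i _ =>
            measureReal_forall_l2_le_imp_mem_le ((hmeasf i).union (hmeash i)) (hUhalf i) hη) _
      _ ≤ δ + Real.exp (-η ^ 2 / 2) * (1 + δ) := by
          rw [← Finset.mul_sum]
          exact add_le_add_right (mul_le_mul_of_nonneg_left hUsum (Real.exp_pos _).le) _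
  have hone : 1 ≤ ν.real E + ν.real Eᶜ := by
    have h := measureReal_union_le (μ := ν) E Eᶜ
    rwa [union_compl_self, probReal_univ] at h
  have hδ0 : 0 ≤ δ := measureReal_nonneg.trans hN
  have hexp : Real.exp (-η ^ 2 / 2) ≤ 1 := Real.exp_le_one_iff.2 (by linarith [sq_nonneg η])
  have hsqrt : 1 ≤ √(π / 2) := Real.one_le_sqrt.2 (by linarith [Real.pi_gt_three])
  have h1 := mul_le_mul_of_nonneg_right hsqrt (Real.exp_pos (-η ^ 2 / 2)).le
  have h2 := mul_le_mul_of_nonneg_right hexp hδ0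
  change ν.real E ≥ _
  linarith
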